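/- Fix d, m, n ∈ ℕ, κ > 0, δ ∈ (0,1), and R > 0, and let x₁, …, xₙ ∈ ℝᵈ with ‖xᵢ‖₂ = 1 for all i. Draw a random initialization (θ(0), a) where θ₁(0), …, θ_m(0) are i.i.d. Gaussian N(0, κ² I_d) vectors in ℝᵈ and a₁, …, a_m are i.i.d. uniform on {−1, +1}, independent of the θ_r(0). For parameters θ = (θ₁, …, θ_m) ∈ (ℝᵈ)ᵐ define the two-layer ReLU network f_{θ,a}(x) = (1/√m) Σ_{r=1}^m a_r · max(⟨θ_r, x⟩, 0). For B > 0, let F_{R,B} = { f_{θ,a} : ‖θ_r − θ_r(0)‖₂ ≤ R for all r ∈ [m], and ‖θ − θ(0)‖_F ≤ B }, and let the empirical Rademacher complexity of F_{R,B} on the sample (x₁,…,xₙ) be R_S(F_{R,B}) = (1/n) E_{ε}[ sup_{f ∈ F_{R,B}} Σ_{i=1}^n εᵢ f(xᵢ) ], where ε = (ε₁,…,εₙ) is uniform on {−1,+1}ⁿ. Then with probability at least 1 − δ over the random initialization (θ(0), a), simultaneously for every B > 0: R_S(F_{R,B}) ≤ (B/√(2n)) · (1 + (2 log(2/δ)/m)^{1/4})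 + 2R²√m/κ + R√(2 log(2/δ)). -/

import Mathlib

open MeasureTheory ProbabilityTheory Matrix

lemma aux_map_dot {d : ℕ} (κ : ℝ) (z : Fin d → ℝ) (hz : ∑ j, z j ^ 2 = 1) :
    (Measure.pi fun _ : Fin d => gaussianReal 0 (Real.toNNReal (κ ^ 2))).map (fun θ => θ ⬝ᵥ z)
      = gaussianReal 0 (Real.toNNReal (κ ^ 2)) := by
  set P := (Measure.pi fun _ : Fin d => gaussianReal 0 (Real.toNNReal (κ ^ 2)))
  have hind : iIndepFun (fun (j : Fin d) (θ : Fin d → ℝ) => θ j * z j) P :=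
    iIndepFun_pi (X := fun j t => t * z j) (fun j => by fun_prop)
  apply Measure.ext_of_charFun
  have h1 : (fun θ : Fin d → ℝ => θ ⬝ᵥ z) = ∑ j, (fun θ : Fin d → ℝ => θ j * z j) := by
    ext θ; simp [dotProduct]
  rw [h1, hind.charFun_map_sum_eq_prod (fun j => Measurable.aemeasurable (by fun_prop))]
  have h2 : ∀ j : Fin d, P.map (fun θ : Fin d → ℝ => θ j * z j)
      = gaussianReal 0 (.mk (z j ^ 2) (sq_nonneg _) * Real.toNNReal (κ ^ 2)) := by
    intro j
    have h3 := measurePreserving_eval (fun _ : Fin d => gaussianReal 0 (Real.toNNReal (κ ^ 2))) j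
    have h4 := gaussianReal_map_mul_const (μ := 0) (v := Real.toNNReal (κ ^ 2)) (z j)
    rw [← h3.map_eq, Measure.map_map (by fun_prop) h3.measurable, mul_zero] at h4
    exact h4
  ext t
  simp only [Finset.prod_apply, h2, charFun_gaussianReal, ← Complex.exp_sum]
  congr 1
  simp only [NNReal.coe_mul, NNReal.coe_mk, Real.coe_toNNReal _ (sq_nonneg κ), Complex.ofReal_zero,
    mul_zero, zero_mul, zero_sub, Finset.sum_neg_distrib]
  congr 1
  rw [← Finset.sum_div, ← Finset.sum_mul]
  congr 2
  rw [← Complex.ofReal_sum, ← Finset.sum_mul, hz, one_mul]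

lemma aux_hoeffding {Ω : Type*} [MeasurableSpace Ω] (μ : Measure Ω) [IsProbabilityMeasure μ]
    (m : ℕ) (hm : 0 < m) (Y : Ω → ℝ) (hY : Measurable Y) (hY01 : ∀ ω, Y ω ∈ Set.Icc (0:ℝ) 1)
    (p : ℝ) (hp : ∫ ω, Y ω ∂μ ≤ p) (L : ℝ) (hL : 0 ≤ L) :
    (Measure.pi fun _ : Fin m => μ).real {ω | m * p + √(m * L / 2) ≤ ∑ r, Y (ω r)} ≤ Real.exp (-L) := by
  set P := (Measure.pi fun _ : Fin m => μ)
  have hind : iIndepFun (fun (r : Fin m) (ω : Fin m → Ω) => Y (ω r) - ∫ ω, Y ω ∂μ) P :=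
    iIndepFun_pi (X := fun j t => Y t - ∫ ω, Y ω ∂μ) (fun j => by fun_prop)
  have hint : ∀ r : Fin m, ∫ ω, Y (ω r) ∂P = ∫ ω, Y ω ∂μ := by
    intro r
    have := (measurePreserving_eval (fun _ : Fin m => μ) r)
    rw [← this.map_eq, integral_map (measurable_pi_apply r).aemeasurable (by fun_prop)]
  have hsub : ∀ r ∈ Finset.univ, HasSubgaussianMGF (fun (ω : Fin m → Ω) => Y (ω r) - ∫ ω, Y ω ∂μ)
      ((‖(1:ℝ) - 0‖₊ / 2) ^ 2) P := by
    intro r _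
    rw [← hint r]
    exact hasSubgaussianMGF_of_mem_Icc (hY.comp (measurable_pi_apply r)).aemeasurable (ae_of_all _ fun ω => hY01 _)
  have := HasSubgaussianMGF.measure_sum_ge_le_of_iIndepFun hind hsub (Real.sqrt_nonneg (m * L / 2))
  refine (measureReal_mono ?_).trans (this.trans ?_)
  · intro ω hω
    simp only [Set.mem_ofPred_eq, Finset.sum_sub_distrib, Finset.sum_const, Finset.card_univ, Fintype.card_fin, nsmul_eq_mul] at hω ⊢
    have : (m:ℝ) * ∫ ω, Y ω ∂μ ≤ m * p := by gcongr
    linarith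
  · rw [neg_div, Real.sq_sqrt (by positivity)]
    have : (m:ℝ) ≠ 0 := by positivity
    apply le_of_eq
    congr 2
    simp
    field_simp

lemma aux_pos (κ : ℝ) : (gaussianReal 0 (Real.toNNReal (κ ^ 2))).real (Set.Ioi 0) ≤ 1 / 2 := by
  set g := gaussianReal 0 (Real.toNNReal (κ ^ 2)) with hg
  have h1 : g.map (fun x => -x) = g := by rw [hg, gaussianReal_map_neg]; simp
  have h2 : g.real (Set.Iio 0) = g.real (Set.Ioi 0) := by
    nth_rewrite 2 [← h1]
    rw [map_measureReal_apply (by fun_prop) measurableSet_Ioi]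
    congr 1; ext; simp
  have h3 : g.real (Set.Iio 0 ∪ Set.Ioi 0) ≤ 1 := measureReal_le_one
  rw [measureReal_union (by rw [Set.disjoint_left]; intro a ha hb; simp at ha hb; linarith) measurableSet_Ioi] at h3
  linarith

lemma aux_band (κ R : ℝ) (hκ : 0 < κ) (hR : 0 < R) :
    (gaussianReal 0 (Real.toNNReal (κ ^ 2))).real (Set.Icc (-R) R) ≤ R / κ := by
  have hv : Real.toNNReal (κ ^ 2) ≠ 0 := by simp; positivity
  rw [Measure.real, gaussianReal_apply_eq_integral _ hv, ENNReal.toReal_ofReal (integral_nonneg fun x => gaussianPDFReal_nonneg _ _ _)]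
  have : ∫ x in Set.Icc (-R) R, gaussianPDFReal 0 (Real.toNNReal (κ ^ 2)) x ≤ ∫ x in Set.Icc (-R) R, (1 / (2 * κ) : ℝ) := by
    apply integral_mono (integrable_gaussianPDFReal _ _).integrableOn (integrableOn_const (by simp))
    intro x
    simp only [gaussianPDFReal, Real.coe_toNNReal _ (sq_nonneg κ)]
    have h1 : Real.exp (-(x - 0) ^ 2 / (2 * κ ^ 2)) ≤ 1 := by
      rw [Real.exp_le_one_iff, neg_div]
      have : 0 ≤ (x - 0) ^ 2 / (2 * κ ^ 2) := by positivity
      linarith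
    have h2 : 2 * κ ≤ √(2 * Real.pi * κ ^ 2) := by
      apply Real.le_sqrt_of_sq_le
      nlinarith [Real.pi_gt_three, sq_nonneg κ]
    calc _ ≤ (√(2 * Real.pi * κ ^ 2))⁻¹ * 1 := by gcongr
      _ ≤ _ := by rw [mul_one, one_div]; gcongr
  refine this.trans (le_of_eq ?_)
  simp
  rw [max_eq_left (by linarith)]
  field_simp; ring

noncomputable def auxSign : Measure ℝ :=
  (1 / 2 : ENNReal) • Measure.dirac (-1 : ℝ) + (1 / 2 : ENNReal) • Measure.dirac (1 : ℝ)

instance : IsProbabilityMeasure auxSign := ⟨by simp [auxSign, ENNReal.inv_two_add_inv_two]⟩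

lemma auxSign_ae : ∀ᵐ t ∂auxSign, t = 1 ∨ t = -1 := by
  rw [auxSign, ae_add_measure_iff]
  constructor <;> apply Measure.ae_smul_measure <;> rw [ae_dirac_iff (by measurability)] <;> simp

lemma auxSign_pi_ae (k : ℕ) : ∀ᵐ a ∂(Measure.pi fun _ : Fin k => auxSign), ∀ r, a r = 1 ∨ a r = -1 := by
  rw [ae_all_iff]
  intro r
  exact (measurePreserving_eval (fun _ : Fin k => auxSign) r).quasiMeasurePreserving.ae auxSign_ae

lemma auxSign_memLp (c : ℝ) (p : ENNReal): MemLp (fun t : ℝ => t * c) p auxSign := by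
  apply MemLp.of_bound (by fun_prop) |c|
  filter_upwards [auxSign_ae] with t ht
  rcases ht with rfl | rfl <;> simp

lemma auxSign_integral (f : ℝ → ℝ) : ∫ t, f t ∂auxSign = (f 1 + f (-1)) / 2 := by
  rw [auxSign, integral_add_measure, integral_smul_measure, integral_smul_measure]
  · simp; ring
  · apply Integrable.smul_measure (integrable_dirac (by simp)) (by simp)
  · apply Integrable.smul_measure (integrable_dirac (by simp)) (by simp)

lemma aux_lin_int {n : ℕ} (c : Fin n → ℝ) :
    Integrable (fun ε => ∑ i, ε i * c i) (Measure.pi fun _ : Fin n => auxSign) ∧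
    ∫ ε, ∑ i, ε i * c i ∂(Measure.pi fun _ : Fin n => auxSign) = 0 := by
  have h : ∀ i : Fin n, Integrable (fun ε : Fin n → ℝ => ε i * c i) (Measure.pi fun _ : Fin n => auxSign) := fun i =>
    ((auxSign_memLp (c i) 1).comp_measurePreserving (measurePreserving_eval (fun _ : Fin n => auxSign) i)).integrable le_rfl
  refine ⟨integrable_finsetSum _ fun i _ => h i, ?_⟩
  rw [integral_finsetSum _ fun i _ => h i]
  apply Finset.sum_eq_zero
  intro i _
  have := (measurePreserving_eval (fun _ : Fin n => auxSign) i)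
  have h2 : ∫ t, t * c i ∂auxSign = 0 := by rw [auxSign_integral]; ring
  rw [← this.map_eq, integral_map (measurable_pi_apply i).aemeasurable (by fun_prop)] at h2
  exact h2

lemma aux_sq_int {n : ℕ} (c : Fin n → ℝ) :
    Integrable (fun ε => (∑ i, ε i * c i) ^ 2) (Measure.pi fun _ : Fin n => auxSign) ∧
    ∫ ε, (∑ i, ε i * c i) ^ 2 ∂(Measure.pi fun _ : Fin n => auxSign) = ∑ i, c i ^ 2 := by
  have h : ∀ i : Fin n, MemLp (fun ε : Fin n → ℝ => ε i * c i) 2 (Measure.pi fun _ : Fin n => auxSign) := fun i =>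
    ((auxSign_memLp (c i) 2).comp_measurePreserving (measurePreserving_eval (fun _ : Fin n => auxSign) i))
  refine ⟨(memLp_finsetSum _ fun i _ => h i).integrable_sq, ?_⟩
  have h1 := variance_sum_pi (μ := fun _ : Fin n => auxSign) (X := fun i t => t * c i) (fun i => auxSign_memLp (c i) 2)
  have h2 : (∑ i, fun ω : Fin n → ℝ => ω i * c i) = fun ω => ∑ i, ω i * c i := by ext; simp
  rw [h2, variance_of_integral_eq_zero (Measurable.aemeasurable (by fun_prop)) (aux_lin_int c).2] at h1
  rw [h1]
  congr 1; ext i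
  rw [variance_of_integral_eq_zero (by fun_prop) (by rw [auxSign_integral]; ring), auxSign_integral]
  ring

lemma aux_norm_sq {d : ℕ} (v : Fin d → ℝ) :
    ‖(WithLp.equiv 2 (Fin d → ℝ)).symm v‖ ^ 2 = ∑ j, v j ^ 2 := by
  rw [EuclideanSpace.norm_eq, Real.sq_sqrt (by positivity)]
  simp

lemma aux_relu (e a t t0 R : ℝ) (he : e = 1 ∨ e = -1) (ha : a = 1 ∨ a = -1) (hR : |t - t0| ≤ R) :
    e * (a * max t 0) ≤ e * (a * (if 0 < t0 then 1 else 0) * t) +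
      R * (if t0 ∈ Set.Icc (-R) R then 1 else 0) := by
  have h1 := abs_le.1 hR
  have key : |max t 0 - (if 0 < t0 then 1 else 0) * t| ≤ R * (if t0 ∈ Set.Icc (-R) R then 1 else 0) := by
    simp only [Set.mem_Icc]
    split_ifs with h2 h3 h3 <;> rcases le_total t 0 with h | h <;>
      simp only [max_eq_left, max_eq_right, h, abs_le] <;> 
      first
      | (constructor <;> linarith)
      | (exfalso; apply h3; constructor <;> linarith)
  have key2 := abs_le.1 key
  rcases he with rfl | rfl <;> rcases ha with rfl | rfl <;> linarith

lemma aux_pointwise {d m n : ℕ} (R B c : ℝ) (hR : 0 < R) (hB : 0 < B) (hc : 0 < c)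
    (x : Fin n → Fin d → ℝ)
    (hx : ∀ i, ∑ j, x i j ^ 2 = 1) (θ₀ θ : Fin m → Fin d → ℝ) (a : Fin m → ℝ)
    (ha : ∀ r, a r = 1 ∨ a r = -1) (ε : Fin n → ℝ) (hε : ∀ i, ε i = 1 ∨ ε i = -1)
    (h1 : ∀ r, ∑ j, (θ r j - θ₀ r j) ^ 2 ≤ R ^ 2)
    (h2 : ∑ r, ∑ j, (θ r j - θ₀ r j) ^ 2 ≤ B ^ 2) :
    ∑ i, ε i * ∑ r, a r * max (θ r ⬝ᵥ x i) 0 ≤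
      (∑ i, ε i * ∑ r, a r * (if 0 < θ₀ r ⬝ᵥ x i then 1 else 0) * (θ₀ r ⬝ᵥ x i)) +
      (B * c / 2 + B / (2 * c) * ∑ r, ∑ j, (∑ i, ε i * (a r * (if 0 < θ₀ r ⬝ᵥ x i then 1 else 0) * x i j)) ^ 2) +
      R * ∑ r, ∑ i, (if θ₀ r ⬝ᵥ x i ∈ Set.Icc (-R) R then 1 else 0) := by
  set I : Fin m → Fin n → ℝ := fun r i => if 0 < θ₀ r ⬝ᵥ x i then 1 else 0
  set J : Fin m → Fin n → ℝ := fun r i => if θ₀ r ⬝ᵥ x i ∈ Set.Icc (-R) R then 1 else 0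
  have hd : ∀ r i, θ r ⬝ᵥ x i - θ₀ r ⬝ᵥ x i = ∑ j, (θ r j - θ₀ r j) * x i j := by
    intro r i
    simp [dotProduct, ← Finset.sum_sub_distrib, sub_mul]
  have hcs : ∀ r i, |θ r ⬝ᵥ x i - θ₀ r ⬝ᵥ x i| ≤ R := by
    intro r i
    apply abs_le_of_sq_le_sq _ hR.le
    rw [hd]
    refine (Finset.sum_mul_sq_le_sq_mul_sq _ _ _).trans ?_
    rw [hx, mul_one]
    exact h1 r
  have step1 : ∑ i, ε i * ∑ r, a r * max (θ r ⬝ᵥ x i) 0 ≤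
      ∑ i, ∑ r, (ε i * (a r * I r i * (θ r ⬝ᵥ x i)) + R * J r i) := by
    apply Finset.sum_le_sum; intro i _
    rw [Finset.mul_sum]
    apply Finset.sum_le_sum; intro r _
    exact aux_relu _ _ _ _ _ (hε i) (ha r) (hcs r i)
  have step2 : ∑ i, ∑ r, (ε i * (a r * I r i * (θ r ⬝ᵥ x i)) + R * J r i) =
      (∑ i, ε i * ∑ r, a r * I r i * (θ₀ r ⬝ᵥ x i)) +
      (∑ r, ∑ j, (θ r j - θ₀ r j) * ∑ i, ε i * (a r * I r i * x i j)) + R * ∑ r, ∑ i, J r i := by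
    have e1 : ∑ r, ∑ j, (θ r j - θ₀ r j) * ∑ i, ε i * (a r * I r i * x i j) =
        ∑ i, ∑ r, ε i * (a r * I r i * (θ r ⬝ᵥ x i - θ₀ r ⬝ᵥ x i)) := by
      rw [Finset.sum_comm (s := Finset.univ (α := Fin n))]
      apply Finset.sum_congr rfl; intro r _
      simp_rw [hd, Finset.mul_sum]
      rw [Finset.sum_comm]
      apply Finset.sum_congr rfl; intro i _
      apply Finset.sum_congr rfl; intro j _
      ring
    rw [e1, Finset.sum_comm (f := fun r i => J r i)]
    simp only [Finset.mul_sum, ← Finset.sum_add_distrib]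
    apply Finset.sum_congr rfl; intro i _
    apply Finset.sum_congr rfl; intro r _
    ring
  have step3 : (∑ r, ∑ j, (θ r j - θ₀ r j) * ∑ i, ε i * (a r * I r i * x i j)) ≤
      B * c / 2 + B / (2 * c) * ∑ r, ∑ j, (∑ i, ε i * (a r * I r i * x i j)) ^ 2 := by
    have : ∀ u v : ℝ, u * v ≤ c / (2 * B) * u ^ 2 + B / (2 * c) * v ^ 2 := by
      intro u v
      have : c / (2 * B) * u ^ 2 + B / (2 * c) * v ^ 2 - u * v = (c * u - B * v) ^ 2 / (2 * B * c) := by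
        field_simp; ring
      have h : 0 ≤ (c * u - B * v) ^ 2 / (2 * B * c) := by positivity
      linarith
    calc _ ≤ ∑ r, ∑ j, (c / (2 * B) * (θ r j - θ₀ r j) ^ 2 + B / (2 * c) * (∑ i, ε i * (a r * I r i * x i j)) ^ 2) := by
          apply Finset.sum_le_sum; intro r _
          apply Finset.sum_le_sum; intro j _
          exact this _ _
      _ = c / (2 * B) * ∑ r, ∑ j, (θ r j - θ₀ r j) ^ 2 + B / (2 * c) * ∑ r, ∑ j, (∑ i, ε i * (a r * I r i * x i j)) ^ 2 := by
          simp only [Finset.mul_sum, Finset.sum_add_distrib]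
      _ ≤ c / (2 * B) * B ^ 2 + B / (2 * c) * ∑ r, ∑ j, (∑ i, ε i * (a r * I r i * x i j)) ^ 2 := by gcongr
      _ = _ := by field_simp
  linarith

lemma aux_det {d m n : ℕ} (hm : 0 < m) (hn : 0 < n) (κ : ℝ) (hκ : 0 < κ) (R : ℝ) (hR : 0 < R) (L : ℝ) (hL : 0 ≤ L)
    (x : Fin n → Fin d → ℝ)
    (hx : ∀ i, ∑ j, x i j ^ 2 = 1) (θ₀ : Fin m → Fin d → ℝ) (a : Fin m → ℝ)
    (ha : ∀ r, a r = 1 ∨ a r = -1) (B : ℝ) (hB : 0 < B)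
    (hS1 : ∑ r, ∑ i, (if 0 < θ₀ r ⬝ᵥ x i then 1 else 0 : ℝ) ≤ n * (m * (1 / 2) + √(m * L / 2)))
    (hS2 : ∑ r, ∑ i, (if θ₀ r ⬝ᵥ x i ∈ Set.Icc (-R) R then 1 else 0 : ℝ) ≤ n * (m * (R / κ) + √(m * L / 2))) :
    (1 / n : ℝ) * ∫ ε, (⨆ θ : {θ : Fin m → Fin d → ℝ //
                (∀ r, ‖(WithLp.equiv 2 (Fin d → ℝ)).symm (θ r - θ₀ r)‖ ≤ R) ∧
                Real.sqrt (∑ r : Fin m, ∑ j : Fin d, (θ r j - θ₀ r j) ^ 2) ≤ B},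
              ∑ i : Fin n, ε i * ((1 / Real.sqrt m) * ∑ r : Fin m, a r * max (θ.1 r ⬝ᵥ x i) 0)) 
              ∂(Measure.pi fun _ : Fin n => auxSign) ≤
          B / Real.sqrt (2 * n) * (1 + (2 * L / m) ^ ((1 : ℝ) / 4)) +
            2 * R ^ 2 * Real.sqrt m / κ + R * Real.sqrt (2 * L) := by
  set F : (Fin n → ℝ) → ℝ := fun ε => (⨆ θ : {θ : Fin m → Fin d → ℝ //
                (∀ r, ‖(WithLp.equiv 2 (Fin d → ℝ)).symm (θ r - θ₀ r)‖ ≤ R) ∧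
                Real.sqrt (∑ r : Fin m, ∑ j : Fin d, (θ r j - θ₀ r j) ^ 2) ≤ B},
              ∑ i : Fin n, ε i * ((1 / Real.sqrt m) * ∑ r : Fin m, a r * max (θ.1 r ⬝ᵥ x i) 0)) with hF
  set ν := (Measure.pi fun _ : Fin n => auxSign)
  set s : ℝ := (2 * L / m) ^ ((1 : ℝ) / 4) with hs
  have hs0 : 0 ≤ s := by positivity
  have hs4 : s ^ 4 = 2 * L / m := by
    rw [hs, ← Real.rpow_natCast, ← Real.rpow_mul (by positivity)]
    norm_num
  have hm' : (0:ℝ) < m := by positivity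
  have hn' : (0:ℝ) < n := by positivity
  have hLs : L = m * s ^ 4 / 2 := by rw [hs4]; field_simp
  set A := √(m : ℝ) with hA
  have hA0 : 0 < A := by positivity
  have hA2 : A ^ 2 = m := Real.sq_sqrt hm'.le
  set N := √(2 * n : ℝ) with hN
  have hN0 : 0 < N := by positivity
  have hN2 : N ^ 2 = 2 * n := Real.sq_sqrt (by positivity)
  have q1 : √(m * L / 2) = m * s ^ 2 / 2 := by
    rw [Real.sqrt_eq_iff_mul_self_eq (by positivity) (by positivity), hLs]; ring
  have q2 : √(2 * L) = A * s ^ 2 := by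
    rw [Real.sqrt_eq_iff_mul_self_eq (by positivity) (by positivity), hLs, ← hA2]; ring
  rw [q1] at hS1 hS2
  rw [q2]
  by_cases hFi : Integrable F ν
  swap
  · rw [integral_undef hFi]; rw [mul_zero]; positivity
  set c : ℝ := N * A / 2 * (1 + s) with hc
  have hc0 : 0 < c := by positivity
  set S1 := ∑ r, ∑ i, (if 0 < θ₀ r ⬝ᵥ x i then 1 else 0 : ℝ) with hS1d
  set S2 := ∑ r, ∑ i, (if θ₀ r ⬝ᵥ x i ∈ Set.Icc (-R) R then 1 else 0 : ℝ)
  have hcS : S1 ≤ c ^ 2 := by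
    have : c ^ 2 = n * m * (1 + s) ^ 2 / 2 := by
      rw [hc, mul_pow, div_pow, mul_pow, hN2, hA2]; ring
    rw [this]
    have : 0 ≤ n * m * s := by positivity
    nlinarith
  set G : (Fin n → ℝ) → ℝ := fun ε => (1 / A) * ((∑ i, ε i * ∑ r, a r * (if 0 < θ₀ r ⬝ᵥ x i then 1 else 0) * (θ₀ r ⬝ᵥ x i)) +
      (B * c / 2 + B / (2 * c) * ∑ r, ∑ j, (∑ i, ε i * (a r * (if 0 < θ₀ r ⬝ᵥ x i then 1 else 0) * x i j)) ^ 2) +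
      R * S2) with hG
  have hFG : ∀ᵐ ε ∂ν, F ε ≤ G ε := by
    filter_upwards [auxSign_pi_ae n] with ε hε
    have : Nonempty {θ : Fin m → Fin d → ℝ //
                (∀ r, ‖(WithLp.equiv 2 (Fin d → ℝ)).symm (θ r - θ₀ r)‖ ≤ R) ∧
                Real.sqrt (∑ r : Fin m, ∑ j : Fin d, (θ r j - θ₀ r j) ^ 2) ≤ B} := 
      ⟨θ₀, by intro r; rw [sub_self]; simpa using hR.le, by simpa using hB.le⟩
    apply ciSup_le
    rintro ⟨θ, h1, h2⟩
    have h1' : ∀ r, ∑ j, (θ r j - θ₀ r j) ^ 2 ≤ R ^ 2 := by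
      intro r
      have := aux_norm_sq (θ r - θ₀ r)
      simp only [Pi.sub_apply] at this
      rw [← this]
      have := h1 r
      gcongr
    have h2' := (Real.sqrt_le_left hB.le).1 h2
    have := aux_pointwise R B c hR hB hc0 x hx θ₀ θ a ha ε hε h1' h2'
    calc _ = (1 / A) * ∑ i, ε i * ∑ r, a r * max (θ r ⬝ᵥ x i) 0 := by
          rw [Finset.mul_sum]; apply Finset.sum_congr rfl; intro i _; ring
      _ ≤ _ := by simp only [hG]; gcongr
  have i1 := aux_lin_int (fun i : Fin n => ∑ r, a r * (if 0 < θ₀ r ⬝ᵥ x i then 1 else 0) * (θ₀ r ⬝ᵥ x i))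
  have i2 := fun r j => aux_sq_int (fun i : Fin n => (a r * (if 0 < θ₀ r ⬝ᵥ x i then 1 else 0) * x i j))
  have i3 : Integrable (fun ε : Fin n → ℝ => ∑ r, ∑ j, (∑ i, ε i * (a r * (if 0 < θ₀ r ⬝ᵥ x i then 1 else 0) * x i j)) ^ 2) ν :=
    integrable_finsetSum _ fun r _ => integrable_finsetSum _ fun j _ => (i2 r j).1
  have i4 : ∫ ε, (∑ r, ∑ j, (∑ i, ε i * (a r * (if 0 < θ₀ r ⬝ᵥ x i then 1 else 0) * x i j)) ^ 2) ∂ν = S1 := by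
    rw [integral_finsetSum _ fun r _ => integrable_finsetSum _ fun j _ => (i2 r j).1]
    apply Finset.sum_congr rfl; intro r _
    rw [integral_finsetSum _ fun j _ => (i2 r j).1]
    simp only [(i2 r _).2]
    rw [Finset.sum_comm]
    apply Finset.sum_congr rfl; intro i _
    simp only [mul_pow]
    rw [← Finset.mul_sum, hx]
    have : a r ^ 2 = 1 := by rcases ha r with h | h <;> rw [h] <;> norm_num
    rw [this]
    split_ifs <;> simp
  have i5 : Integrable (fun ε : Fin n → ℝ => B * c / 2 + B / (2 * c) * ∑ r, ∑ j, (∑ i, ε i * (a r * (if 0 < θ₀ r ⬝ᵥ x i then 1 else 0) * x i j)) ^ 2) ν :=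
    (integrable_const _).add (i3.const_mul _)
  have hGi : Integrable G ν := by
    apply Integrable.const_mul
    exact (i1.1.add i5).add (integrable_const _)
  have hGint : ∫ ε, G ε ∂ν = (1 / A) * (B * c / 2 + B / (2 * c) * S1 + R * S2) := by
    simp only [hG]
    rw [integral_const_mul, integral_add (by exact i1.1.add i5) (integrable_const _), integral_add i1.1 i5, i1.2,
      integral_add (integrable_const _) (i3.const_mul _), integral_const_mul, i4]
    simp
  have hle : ∫ ε, F ε ∂ν ≤ (1 / A) * (B * c + R * S2) := by
    refine (integral_mono_ae hFi hGi hFG).trans ?_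
    rw [hGint]
    have : B / (2 * c) * S1 ≤ B * c / 2 := by
      calc _ ≤ B / (2 * c) * c ^ 2 := by gcongr
        _ = _ := by field_simp
    gcongr
    linarith
  calc _ ≤ (1 / n : ℝ) * ((1 / A) * (B * c + R * (n * (m * (R / κ) + m * s ^ 2 / 2)))) := by gcongr; exact hle.trans (by gcongr)
    _ = B / N * (1 + s) + R ^ 2 * A / κ + R * (A * s ^ 2) / 2 := by
      rw [hc, ← hA2, show (n:ℝ) = N ^ 2 / 2 by rw [hN2]; ring]
      field_simp
      ring
    _ ≤ _ := by
      have : 0 ≤ R ^ 2 * A / κ := by positivity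
      have : 0 ≤ R * (A * s ^ 2) := by positivity
      have : 2 * R ^ 2 * A / κ = 2 * (R ^ 2 * A / κ) := by ring
      linarith

lemma aux_tail {d m n : ℕ} (hm : 0 < m) (hn : 0 < n) (κ : ℝ) (L : ℝ) (hL : 0 ≤ L)
    (x : Fin n → Fin d → ℝ) (hx : ∀ i, ∑ j, x i j ^ 2 = 1) (A : Set ℝ) (hA : MeasurableSet A)
    [DecidablePred (· ∈ A)]
    (p : ℝ) (hp : (gaussianReal 0 (Real.toNNReal (κ ^ 2))).real A ≤ p) :
    (Measure.pi fun _ : Fin m => Measure.pi fun _ : Fin d =>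
          gaussianReal 0 (Real.toNNReal (κ ^ 2))).real
      {θ | ¬ ∑ r, ∑ i, (if θ r ⬝ᵥ x i ∈ A then 1 else 0 : ℝ) ≤ n * (m * p + √(m * L / 2))} ≤ Real.exp (-L) := by
  set P := Measure.pi fun _ : Fin d => gaussianReal 0 (Real.toNNReal (κ ^ 2))
  have hn' : (0:ℝ) < n := by positivity
  have hdm : ∀ i, Measurable (fun θ : Fin d → ℝ => θ ⬝ᵥ x i) := by
    intro i; unfold dotProduct; fun_prop
  have hI : ∀ i, Measurable (fun θ : Fin d → ℝ => (if θ ⬝ᵥ x i ∈ A then 1 else 0 : ℝ)) := by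
    intro i
    exact Measurable.ite (hdm i hA) measurable_const measurable_const
  have hb : ∀ θ i, (if θ ⬝ᵥ x i ∈ A then 1 else 0 : ℝ) ∈ Set.Icc (0:ℝ) 1 := by
    intro θ i; split_ifs <;> simp
  have hii : ∀ i, Integrable (fun θ : Fin d → ℝ => (if θ ⬝ᵥ x i ∈ A then 1 else 0 : ℝ)) P := fun i =>
    Integrable.of_mem_Icc 0 1 (hI i).aemeasurable (ae_of_all _ fun θ => hb θ i)
  have hint : ∀ i, ∫ θ, (if θ ⬝ᵥ x i ∈ A then 1 else 0 : ℝ) ∂P ≤ p := by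
    intro i
    have e : (fun θ : Fin d → ℝ => (if θ ⬝ᵥ x i ∈ A then 1 else 0 : ℝ)) =
      ((fun θ : Fin d → ℝ => θ ⬝ᵥ x i) ⁻¹' A).indicator 1 := by
      ext θ; simp [Set.indicator]
    rw [e, integral_indicator_one (hdm i hA), ← map_measureReal_apply (hdm i) hA, aux_map_dot κ _ (hx i)]
    exact hp
  have := aux_hoeffding P m hm (fun θ => (1 / n : ℝ) * ∑ i, (if θ ⬝ᵥ x i ∈ A then 1 else 0 : ℝ))
    (by fun_prop) (by
      intro θ
      constructor
      · exact mul_nonneg (by positivity) (Finset.sum_nonneg fun i _ => (hb θ i).1)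
      · calc _ ≤ (1 / n : ℝ) * ∑ i : Fin n, (1:ℝ) := by
              gcongr with i; exact (hb θ i).2
          _ = 1 := by simp; field_simp) p (by
      rw [integral_const_mul, integral_finsetSum _ fun i _ => hii i]
      calc _ ≤ (1 / n : ℝ) * ∑ i : Fin n, p := by
              gcongr with i; exact hint i
        _ = p := by simp; field_simp) L hL
  refine (measureReal_mono ?_).trans this
  intro θ hθ
  simp only [Set.mem_ofPred_eq, not_le] at hθ ⊢
  rw [← Finset.mul_sum]
  rw [one_div, ← div_eq_inv_mul, le_div_iff₀ hn']
  linarith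

lemma aux_main (d m n : ℕ) (hm : 0 < m) (hn : 0 < n)
    (κ : ℝ) (hκ : 0 < κ) (δ : ℝ) (hδ : δ ∈ Set.Ioo (0 : ℝ) 1) (R : ℝ) (hR : 0 < R)
    (x : Fin n → Fin d → ℝ)
    (hx : ∀ i, ‖(WithLp.equiv 2 (Fin d → ℝ)).symm (x i)‖ = 1) :
    (1 - δ) ≤
      (((Measure.pi fun _ : Fin m => Measure.pi fun _ : Fin d =>
          gaussianReal 0 (Real.toNNReal (κ ^ 2))).prod
        (Measure.pi fun _ : Fin m => auxSign)) {p : (Fin m → Fin d → ℝ) × (Fin m → ℝ) | ∀ B > (0 : ℝ),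
        (1 / n : ℝ) *
            ∫ ε, (⨆ θ : {θ : Fin m → Fin d → ℝ //
                (∀ r, ‖(WithLp.equiv 2 (Fin d → ℝ)).symm (θ r - p.1 r)‖ ≤ R) ∧
                Real.sqrt (∑ r : Fin m, ∑ j : Fin d, (θ r j - p.1 r j) ^ 2) ≤ B},
              ∑ i : Fin n, ε i * ((1 / Real.sqrt m) * ∑ r : Fin m, p.2 r * max (θ.1 r ⬝ᵥ x i) 0))
                ∂(Measure.pi fun _ : Fin n => auxSign) ≤
          B / Real.sqrt (2 * n) * (1 + (2 * Real.log (2 / δ) / m) ^ ((1 : ℝ) / 4)) +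
            2 * R ^ 2 * Real.sqrt m / κ + R * Real.sqrt (2 * Real.log (2 / δ))}).toReal := by
  obtain ⟨hδ0, hδ1⟩ := hδ
  have hx' : ∀ i, ∑ j, x i j ^ 2 = 1 := by
    intro i; rw [← aux_norm_sq, hx]; norm_num
  have hL : 0 ≤ Real.log (2 / δ) := by
    apply Real.log_nonneg
    rw [le_div_iff₀ hδ0]; linarith
  have hexp : Real.exp (-Real.log (2 / δ)) = δ / 2 := by
    rw [Real.exp_neg, Real.exp_log (by positivity), inv_div]
  have t1 := aux_tail (m := m) hm hn κ _ hL x hx' (Set.Ioi 0) measurableSet_Ioi _ (aux_pos κ)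
  have t2 := aux_tail (m := m) hm hn κ _ hL x hx' (Set.Icc (-R) R) measurableSet_Icc _ (aux_band κ R hκ hR)
  rw [hexp] at t1 t2
  simp only [Set.mem_Ioi] at t1
  set P := (Measure.pi fun _ : Fin m => Measure.pi fun _ : Fin d =>
          gaussianReal 0 (Real.toNNReal (κ ^ 2)))
  set Q := (Measure.pi fun _ : Fin m => auxSign)
  set T1 := {θ : Fin m → Fin d → ℝ | ¬ ∑ r, ∑ i, (if 0 < θ r ⬝ᵥ x i then 1 else 0 : ℝ) ≤
    n * (m * (1 / 2) + √(m * Real.log (2 / δ) / 2))} with hT1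
  set T2 := {θ : Fin m → Fin d → ℝ | ¬ ∑ r, ∑ i, (if θ r ⬝ᵥ x i ∈ Set.Icc (-R) R then 1 else 0 : ℝ) ≤
    n * (m * (R / κ) + √(m * Real.log (2 / δ) / 2))} with hT2
  set S := {p : (Fin m → Fin d → ℝ) × (Fin m → ℝ) | ∀ B > (0 : ℝ), _} with hS
  have hsub : (Sᶜ : Set _) ≤ᵐ[P.prod Q] ((T1 ∪ T2) ×ˢ Set.univ : Set _) := by
    have hae : ∀ᵐ p ∂(P.prod Q), ∀ r, p.2 r = 1 ∨ p.2 r = -1 :=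
      Measure.quasiMeasurePreserving_snd.ae (auxSign_pi_ae m)
    filter_upwards [hae] with p hp hpS
    by_contra hcon
    have hcon' : p ∉ ((T1 ∪ T2) ×ˢ Set.univ : Set ((Fin m → Fin d → ℝ) × (Fin m → ℝ))) := hcon
    simp only [Set.mem_prod, Set.mem_union, Set.mem_univ, and_true, not_or, hT1, hT2,
      Set.mem_ofPred_eq, not_not] at hcon'
    apply hpS
    intro B hB
    exact aux_det hm hn κ hκ R hR _ hL x hx' p.1 p.2 hp B hB hcon'.1 hcon'.2
  have h1 : (P.prod Q).real Sᶜ ≤ δ := by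
    have h2 : (P.prod Q).real Sᶜ ≤ (P.prod Q).real ((T1 ∪ T2) ×ˢ Set.univ) :=
      ENNReal.toReal_mono (measure_ne_top _ _) (measure_mono_ae hsub)
    rw [measureReal_prod_prod] at h2
    have h3 := measureReal_union_le (μ := P) T1 T2
    have h4 : Q.real Set.univ = 1 := by simp
    rw [h4] at h2
    linarith
  have h5 := measureReal_union_le (μ := P.prod Q) S Sᶜ
  rw [Set.union_compl_self] at h5
  have h6 : (P.prod Q).real Set.univ = 1 := by simp
  have h7 : (P.prod Q).real S = ((P.prod Q) S).toReal := rfl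
  linarith


/-- Lemma 5.4-style Rademacher complexity bound (Arora et al.) for two-layer ReLU networks:
with first-layer weights initialized i.i.d. `N(0, κ² I_d)` and second-layer signs i.i.d.
uniform on `{-1, 1}`, with probability at least `1 - δ` over the initialization `(θ(0), a)`,
simultaneously for every `B > 0`, the empirical Rademacher complexity of the class
`F_{R,B} = {f_{θ,a} : ‖θ_r - θ_r(0)‖₂ ≤ R ∀r, ‖θ - θ(0)‖_F ≤ B}` on unit-norm data
`x₁, …, xₙ` is at most
`B/√(2n) · (1 + (2 log(2/δ)/m)^{1/4}) + 2R²√m/κ + R √(2 log(2/δ))`. -/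
theorem rademacher_complexity_bound_two_layer_relu
    (d m n : ℕ) (hm : 0 < m) (hn : 0 < n)
    (κ : ℝ) (hκ : 0 < κ) (δ : ℝ) (hδ : δ ∈ Set.Ioo (0 : ℝ) 1) (R : ℝ) (hR : 0 < R)
    (x : Fin n → Fin d → ℝ)
    (hx : ∀ i, ‖(WithLp.equiv 2 (Fin d → ℝ)).symm (x i)‖ = 1) :
    -- uniform measure on the signs {-1, 1} ⊆ ℝ
    let signMeasure : Measure ℝ :=
      (1 / 2 : ENNReal) • Measure.dirac (-1 : ℝ) + (1 / 2 : ENNReal) • Measure.dirac (1 : ℝ)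
    -- initialization: θ_r(0) i.i.d. N(0, κ² I_d), a_r i.i.d. uniform on {-1, 1}
    let μ₀ : Measure ((Fin m → Fin d → ℝ) × (Fin m → ℝ)) :=
      (Measure.pi fun _ : Fin m => Measure.pi fun _ : Fin d =>
          gaussianReal 0 (Real.toNNReal (κ ^ 2))).prod
        (Measure.pi fun _ : Fin m => signMeasure)
    -- Rademacher vector ε uniform on {-1, 1}ⁿ
    let ν : Measure (Fin n → ℝ) := Measure.pi fun _ : Fin n => signMeasure
    -- the two-layer ReLU network f_{θ,a}
    let net : (Fin m → Fin d → ℝ) → (Fin m → ℝ) → (Fin d → ℝ) → ℝ :=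
      fun θ a z => (1 / Real.sqrt m) * ∑ r : Fin m, a r * max (θ r ⬝ᵥ z) 0
    (1 - δ) ≤
      (μ₀ {p : (Fin m → Fin d → ℝ) × (Fin m → ℝ) | ∀ B > (0 : ℝ),
        (1 / n : ℝ) *
            ∫ ε, (⨆ θ : {θ : Fin m → Fin d → ℝ //
                (∀ r, ‖(WithLp.equiv 2 (Fin d → ℝ)).symm (θ r - p.1 r)‖ ≤ R) ∧
                Real.sqrt (∑ r : Fin m, ∑ j : Fin d, (θ r j - p.1 r j) ^ 2) ≤ B},
              ∑ i : Fin n, ε i * net θ.1 p.2 (x i)) ∂ν ≤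
          B / Real.sqrt (2 * n) * (1 + (2 * Real.log (2 / δ) / m) ^ ((1 : ℝ) / 4)) +
            2 * R ^ 2 * Real.sqrt m / κ + R * Real.sqrt (2 * Real.log (2 / δ))}).toReal := by
  intro signMeasure μ₀ ν net
  exact aux_main d m n hm hn κ hκ δ hδ R hR x hx
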